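/- Patching solutions of rough differential equations over a partition: Let X = (x, 𝕏) be a weak-geometric p-rough path with control ω on [0,T], let F : ℝ^d → L(W, ℝ^d) be smooth (F_w(a) := F(a)w), let z : [0,T] → ℝ^d be continuous, and let 0 = t₀ < t₁ < … < t_l = T be a partition of [0,T]. Suppose that for each 0 ≤ i < l there exists C_i < ∞ such that |z_t − z_s − F_{x_{s,t}}(z_s) − G_s(𝕏_{s,t})| ≤ C_i ω(s,t)^{3/p} for all t_i ≤ s ≤ t ≤ t_{i+1}, where G_s ∈ L(W ⊗ W, ℝ^d) is the linear extension of (w, w̃) ↦ (∂_{F_w(z_s)} F_{w̃})(z_s). Then there exists C < ∞ such that |z_t − z_s − F_{x_{s,t}}(z_s) − G_s(𝕏_{s,t})| ≤ C ω(s,t)^{3/p} for all 0 ≤ s ≤ t ≤ T. -/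

import Mathlib

noncomputable section

open scoped BigOperators

/-- `ℝ^n` with the Euclidean norm. -/
abbrev Euc (n : ℕ) : Type := EuclideanSpace ℝ (Fin n)

/-- The `i`-th standard basis vector of `ℝ^n`. -/
def eb {n : ℕ} (i : Fin n) : Euc n := EuclideanSpace.single i 1

/-- Tensor product of two Euclidean vectors, realized in `ℝ^{n×m}` with the Euclidean norm. -/
def tensorE {n m : ℕ} (v : Euc n) (w : Euc m) : EuclideanSpace ℝ (Fin n × Fin m) :=
  (EuclideanSpace.equiv (Fin n × Fin m) ℝ).symm fun p => v p.1 * w p.2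

/-- Application of the (unique) linear extension of a bilinear map `B` to a tensor
`X ∈ ℝ^n ⊗ ℝ^m ≅ ℝ^{n × m}`. -/
def tapply {n m : ℕ} {V : Type*} [NormedAddCommGroup V] [NormedSpace ℝ V]
    (B : Euc n → Euc m → V) (X : EuclideanSpace ℝ (Fin n × Fin m)) : V :=
  ∑ q : Fin n × Fin m, X q • B (eb q.1) (eb q.2)
/-- `ω` is a control on the simplex `{(s,t) : 0 ≤ s ≤ t ≤ T}`. -/
structure IsControl (T : ℝ) (ω : ℝ → ℝ → ℝ) : Prop where
  cont : ContinuousOn (fun q : ℝ × ℝ => ω q.1 q.2)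
    {q : ℝ × ℝ | 0 ≤ q.1 ∧ q.1 ≤ q.2 ∧ q.2 ≤ T}
  nonneg : ∀ ⦃s t : ℝ⦄, 0 ≤ s → s ≤ t → t ≤ T → 0 ≤ ω s t
  zero : ∀ ⦃s : ℝ⦄, 0 ≤ s → s ≤ T → ω s s = 0
  superadditive : ∀ ⦃s t u : ℝ⦄, 0 ≤ s → s ≤ t → t ≤ u → u ≤ T → ω s t + ω t u ≤ ω s u
/-- `(x, XX)` is a `p`-rough path with control `ω` on `[0,T]`. -/
structure IsRoughPath (T p : ℝ) {k : ℕ} (ω : ℝ → ℝ → ℝ)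
    (x : ℝ → Euc k) (XX : ℝ → ℝ → EuclideanSpace ℝ (Fin k × Fin k)) : Prop where
  cont_x : ContinuousOn x (Set.Icc 0 T)
  cont_XX : ContinuousOn (fun q : ℝ × ℝ => XX q.1 q.2)
    {q : ℝ × ℝ | 0 ≤ q.1 ∧ q.1 ≤ q.2 ∧ q.2 ≤ T}
  chen : ∀ ⦃s t u : ℝ⦄, 0 ≤ s → s ≤ t → t ≤ u → u ≤ T →
    XX s u = XX s t + XX t u + tensorE (x t - x s) (x u - x t)
  bound_x : ∀ ⦃s t : ℝ⦄, 0 ≤ s → s ≤ t → t ≤ T → ‖x t - x s‖ ≤ ω s t ^ (1 / p)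
  bound_XX : ∀ ⦃s t : ℝ⦄, 0 ≤ s → s ≤ t → t ≤ T → ‖XX s t‖ ≤ ω s t ^ (2 / p)
/-- The rough path `(x, XX)` is weak-geometric: the symmetric part of `XX s t` is
`(1/2) x_{s,t} ⊗ x_{s,t}`. -/
def IsWeakGeometric (T : ℝ) {k : ℕ} (x : ℝ → Euc k)
    (XX : ℝ → ℝ → EuclideanSpace ℝ (Fin k × Fin k)) : Prop :=
  ∀ ⦃s t : ℝ⦄, 0 ≤ s → s ≤ t → t ≤ T → ∀ i j : Fin k,
    XX s t (i, j) + XX s t (j, i) = (x t - x s) i * (x t - x s) j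

/-- The second-order RDE coefficient `(w, w̃) ↦ (∂_{F_w(a)} F_{w̃})(a)`, i.e. the directional
derivative of `c ↦ F_{w̃}(c)` at `c = a` in the direction `F_w(a)`. -/
def rdeQuad {d k : ℕ} (F : Euc d → Euc k →L[ℝ] Euc d) (a : Euc d)
    (w wt : Euc k) : Euc d :=
  fderiv ℝ (fun c => F c wt) a (F a w)

/-!
The proof is a count of orders in `θ(s,t) = ω(s,t)^(1/p)`, phrased as `=O` along principal filters
of sets of pairs `(s, t)`. Write `R s t` for the remainder of the second-order expansion. By Chen's
identity, for `s ≤ u ≤ t`,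
`R s t = R s u + R u t + (F_{z_u} - F_{z_s} - DF_{z_s}(F_{z_s} x_{s,u})) x_{u,t}`
`  + (G_u - G_s) 𝕏_{u,t}`.
The expansion on `[s, u]` gives `z_{s,u} = F_{z_s} x_{s,u} + O(θ²)`, so by Taylor's formula both
products are `O(θ³)`. Hence the expansion on `[a, u]` and `[u, b]` yields the one on `[a, b]`.
-/

open Asymptotics Filter Set

section BoundedArguments

variable {α E V : Type*} [NormedAddCommGroup E] [NormedAddCommGroup V] {l : Filter α}

theorem exists_eventually_mem_closedBall {f₁ f₂ : α → E} (hf₁ : f₁ =O[l] fun _ => (1 : ℝ))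
    (hf₂ : f₂ =O[l] fun _ => (1 : ℝ)) :
    ∃ M, ∀ᶠ a in l, f₁ a ∈ Metric.closedBall 0 M ∧ f₂ a ∈ Metric.closedBall 0 M := by
  simpa only [mem_closedBall_zero_iff, norm_one, mul_one, norm_prod_le_iff] using
    (hf₁.prod_left hf₂).bound

variable [ProperSpace E] {f f₁ f₂ : α → E} {g : E → V}

theorem isBigO_one_comp_of_continuous (hg : Continuous g) (hf : f =O[l] fun _ => (1 : ℝ)) :
    (fun a => g (f a)) =O[l] fun _ => (1 : ℝ) := by
  obtain ⟨M, hM⟩ := exists_eventually_mem_closedBall hf hf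
  obtain ⟨K, hK⟩ :=
    (isCompact_closedBall (0 : E) M).exists_bound_of_continuousOn hg.continuousOn
  exact .of_bound K (hM.mono fun a ha => by simpa using hK _ ha.1)

theorem isBigO_comp_sub_comp_of_locallyLipschitz (hg : LocallyLipschitz g)
    (hf₁ : f₁ =O[l] fun _ => (1 : ℝ)) (hf₂ : f₂ =O[l] fun _ => (1 : ℝ)) :
    (fun a => g (f₂ a) - g (f₁ a)) =O[l] fun a => f₂ a - f₁ a := by
  obtain ⟨M, hM⟩ := exists_eventually_mem_closedBall hf₁ hf₂
  obtain ⟨K, hK⟩ := hg.locallyLipschitzOn.exists_lipschitzOnWith_of_compact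
    (isCompact_closedBall (0 : E) M)
  exact .of_bound K (hM.mono fun a ha => hK.norm_sub_le ha.2 ha.1)

end BoundedArguments

section Taylor

variable {α E V : Type*} [NormedAddCommGroup E] [NormedSpace ℝ E] [NormedAddCommGroup V]
  [NormedSpace ℝ V] {g : E → V}

theorem norm_sub_sub_fderiv_le_of_lipschitzOnWith {K : NNReal} {s : Set E} (hs : Convex ℝ s)
    (hg : Differentiable ℝ g) (hg' : LipschitzOnWith K (fderiv ℝ g) s) {a b : E} (ha : a ∈ s)
    (hb : b ∈ s) : ‖g b - g a - fderiv ℝ g a (b - a)‖ ≤ K * ‖b - a‖ ^ 2 := by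
  have fderiv_sub_le : ∀ c ∈ segment ℝ a b, ‖fderiv ℝ g c - fderiv ℝ g a‖ ≤ K * ‖b - a‖ :=
    fun c hc => (hg'.norm_sub_le (hs.segment_subset ha hb hc) ha).trans <| by
      gcongr
      exact norm_sub_le_of_mem_segment hc
  rw [sq, ← mul_assoc]
  exact (convex_segment a b).norm_image_sub_le_of_norm_fderiv_le' (fun c _ => hg c)
    fderiv_sub_le (left_mem_segment ℝ a b) (right_mem_segment ℝ a b)

theorem isBigO_sub_sub_fderiv_of_locallyLipschitz [ProperSpace E] {l : Filter α} {f₁ f₂ : α → E}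
    (hg : Differentiable ℝ g) (hg' : LocallyLipschitz (fderiv ℝ g))
    (hf₁ : f₁ =O[l] fun _ => (1 : ℝ)) (hf₂ : f₂ =O[l] fun _ => (1 : ℝ)) :
    (fun a => g (f₂ a) - g (f₁ a) - fderiv ℝ g (f₁ a) (f₂ a - f₁ a)) =O[l]
      fun a => ‖f₂ a - f₁ a‖ ^ 2 := by
  obtain ⟨M, hM⟩ := exists_eventually_mem_closedBall hf₁ hf₂
  obtain ⟨K, hK⟩ := hg'.locallyLipschitzOn.exists_lipschitzOnWith_of_compact
    (isCompact_closedBall (0 : E) M)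
  refine .of_bound K (hM.mono fun a ha => ?_)
  rw [norm_pow, norm_norm]
  exact norm_sub_sub_fderiv_le_of_lipschitzOnWith (convex_closedBall 0 M) hg hK ha.1 ha.2

end Taylor

section Orders

variable {α E V : Type*} {l : Filter α}

theorem isBigO_clm_apply [NormedAddCommGroup E] [NormedSpace ℝ E] [NormedAddCommGroup V]
    [NormedSpace ℝ V] {A : α → E →L[ℝ] V} {v : α → E} {g₁ g₂ : α → ℝ} (hA : A =O[l] g₁)
    (hv : v =O[l] g₂) : (fun a => A a (v a)) =O[l] fun a => g₁ a * g₂ a :=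
  isBoundedBilinearMap_apply.isBigO_comp.trans (hA.norm_left.mul hv.norm_left)

theorem isBigO_pow_pow_of_le {θ : α → ℝ} (hθ : θ =O[l] fun _ => (1 : ℝ)) {m n : ℕ}
    (hmn : m ≤ n) : (fun a => θ a ^ n) =O[l] fun a => θ a ^ m := by
  simpa only [one_pow, mul_one, ← pow_add, Nat.add_sub_cancel' hmn] using
    (isBigO_refl (fun a => θ a ^ m) l).mul (hθ.pow (n - m))

end Orders

section Tensor

variable {n m : ℕ} {V : Type*} [NormedAddCommGroup V] [NormedSpace ℝ V]

theorem sum_smul_eb (v : Euc n) : ∑ i, v i • eb i = v := by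
  simpa [eb] using (EuclideanSpace.basisFun (Fin n) ℝ).sum_repr v

/-- The extension of a bounded bilinear map to tensors, as a continuous linear map. -/
def tapplyCLM (B : Euc n →L[ℝ] Euc m →L[ℝ] V) : EuclideanSpace ℝ (Fin n × Fin m) →L[ℝ] V :=
  ∑ q : Fin n × Fin m, (EuclideanSpace.proj q).smulRight (B (eb q.1) (eb q.2))

theorem tapplyCLM_apply (B : Euc n →L[ℝ] Euc m →L[ℝ] V) (X : EuclideanSpace ℝ (Fin n × Fin m)) :
    tapplyCLM B X = tapply (fun v w => B v w) X := by
  simp [tapplyCLM, tapply]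

theorem tapplyCLM_tensorE (B : Euc n →L[ℝ] Euc m →L[ℝ] V) (v : Euc n) (w : Euc m) :
    tapplyCLM B (tensorE v w) = B v w := by
  conv_rhs => rw [← sum_smul_eb v, ← sum_smul_eb w]
  simp only [tapplyCLM_apply, tapply, tensorE, Fintype.sum_prod_type, map_sum, map_smul, sum_apply,
    smul_apply, Finset.smul_sum, smul_smul]
  rw [Finset.sum_comm]
  simp [mul_comm]

theorem contDiff_tapplyCLM {r : WithTop ℕ∞} :
    ContDiff ℝ r (tapplyCLM : (Euc n →L[ℝ] Euc m →L[ℝ] V) → _) := by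
  unfold tapplyCLM
  fun_prop

end Tensor

section Coefficient

variable {d k : ℕ} {F : Euc d → Euc k →L[ℝ] Euc d}

/-- The second-order coefficient `G` of the equation at the point `a`, as a continuous linear map
on `ℝ^k ⊗ ℝ^k`. -/
def rdeQuadCLM (F : Euc d → Euc k →L[ℝ] Euc d) (a : Euc d) :
    EuclideanSpace ℝ (Fin k × Fin k) →L[ℝ] Euc d :=
  tapplyCLM (fderiv ℝ F a ∘L F a)

theorem rdeQuadCLM_apply {a : Euc d} (hF : DifferentiableAt ℝ F a)
    (X : EuclideanSpace ℝ (Fin k × Fin k)) : rdeQuadCLM F a X = tapply (rdeQuad F a) X := by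
  have rdeQuad_eq : rdeQuad F a = fun w wt => (fderiv ℝ F a ∘L F a) w wt := by
    funext w wt
    simp [rdeQuad, fderiv_clm_apply hF (differentiableAt_const wt)]
  rw [rdeQuadCLM, tapplyCLM_apply, rdeQuad_eq]

theorem rdeQuadCLM_tensorE (a : Euc d) (v w : Euc k) :
    rdeQuadCLM F a (tensorE v w) = fderiv ℝ F a (F a v) w :=
  tapplyCLM_tensorE _ v w

theorem locallyLipschitz_rdeQuadCLM (hF : Differentiable ℝ F)
    (hF' : LocallyLipschitz (fderiv ℝ F)) : LocallyLipschitz (rdeQuadCLM F) := by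
  have hF₁ : ContDiff ℝ 1 F := contDiff_one_iff_fderiv.2 ⟨hF, hF'.continuous⟩
  have bilinear : ContDiff ℝ 1 fun q : (Euc d →L[ℝ] Euc k →L[ℝ] Euc d) × (Euc k →L[ℝ] Euc d) =>
      tapplyCLM (q.1 ∘L q.2) :=
    contDiff_tapplyCLM.comp (contDiff_fst.clm_comp contDiff_snd)
  have comp := bilinear.locallyLipschitz.comp (hF'.prodMk hF₁.locallyLipschitz)
  change LocallyLipschitz fun a => tapplyCLM (fderiv ℝ F a ∘L F a)
  simpa only [Function.comp_def] using comp

end Coefficient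

/-- The ordered pairs `(s, t)` of times in `[a, b]`. -/
def timeSimplex (a b : ℝ) : Set (ℝ × ℝ) :=
  {q | a ≤ q.1 ∧ q.1 ≤ q.2 ∧ q.2 ≤ b}

theorem timeSimplex_subset {a b a' b' : ℝ} (ha : a' ≤ a) (hb : b ≤ b') :
    timeSimplex a b ⊆ timeSimplex a' b' :=
  fun _ hq => ⟨ha.trans hq.1, hq.2.1, hq.2.2.trans hb⟩

theorem Icc_prod_Icc_subset_timeSimplex (a u b : ℝ) : Icc a u ×ˢ Icc u b ⊆ timeSimplex a b :=
  fun _ hq => ⟨hq.1.1, hq.1.2.trans hq.2.1, hq.2.2⟩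

theorem timeSimplex_subset_union (a u b : ℝ) :
    timeSimplex a b ⊆ timeSimplex a u ∪ timeSimplex u b ∪ Icc a u ×ˢ Icc u b := by
  rintro ⟨s, t⟩ ⟨has, hst, htb⟩
  rcases le_total t u with htu | hut
  · exact .inl (.inl ⟨has, hst, htu⟩)
  rcases le_total u s with hus | hsu
  · exact .inl (.inr ⟨hus, hst, htb⟩)
  · exact .inr ⟨⟨has, hsu⟩, hut, htb⟩

/-- The order `ω(s,t)^(1/p)` of the increments of a `p`-rough path with control `ω`. -/
def controlScale (p : ℝ) (ω : ℝ → ℝ → ℝ) (q : ℝ × ℝ) : ℝ :=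
  ω q.1 q.2 ^ (1 / p)

section Control

variable {T p : ℝ} {ω : ℝ → ℝ → ℝ}

theorem IsControl.mono (hω : IsControl T ω) {s' s t t' : ℝ} (h0 : 0 ≤ s') (hs : s' ≤ s)
    (hst : s ≤ t) (ht : t ≤ t') (hT : t' ≤ T) : ω s t ≤ ω s' t' := by
  have h_left := hω.superadditive h0 hs (hst.trans ht) hT
  have h_right := hω.superadditive (h0.trans hs) hst ht hT
  have h_left_nonneg := hω.nonneg h0 hs (by linarith)
  have h_right_nonneg := hω.nonneg (by linarith) ht hT
  linarith

theorem controlScale_pow {q : ℝ × ℝ} (hq : 0 ≤ ω q.1 q.2) (n : ℕ) :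
    controlScale p ω q ^ n = ω q.1 q.2 ^ (n / p) := by
  rw [controlScale, ← Real.rpow_mul_natCast hq, one_div_mul_eq_div]

theorem IsControl.controlScale_nonneg (hω : IsControl T ω) {q : ℝ × ℝ} (hq : q ∈ timeSimplex 0 T) :
    0 ≤ controlScale p ω q :=
  Real.rpow_nonneg (hω.nonneg hq.1 hq.2.1 hq.2.2) _

theorem IsControl.controlScale_mono (hω : IsControl T ω) (hp : 0 < p) {q q' : ℝ × ℝ}
    (hq' : q' ∈ timeSimplex 0 T) (hq : q ∈ timeSimplex q'.1 q'.2) :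
    controlScale p ω q ≤ controlScale p ω q' :=
  Real.rpow_le_rpow (hω.nonneg (hq'.1.trans hq.1) hq.2.1 (hq.2.2.trans hq'.2.2))
    (hω.mono hq'.1 hq.1 hq.2.1 hq.2.2 hq'.2.2) (by positivity)

theorem IsControl.isBigO_controlScale_one (hω : IsControl T ω) (hp : 0 < p) :
    controlScale p ω =O[𝓟 (timeSimplex 0 T)] fun _ => (1 : ℝ) := by
  refine isBigO_principal.2 ⟨controlScale p ω (0, T), fun q hq => ?_⟩
  rw [Real.norm_of_nonneg (hω.controlScale_nonneg hq), norm_one, mul_one]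
  exact hω.controlScale_mono hp ⟨le_rfl, hq.1.trans (hq.2.1.trans hq.2.2), le_rfl⟩ hq

theorem IsControl.isBigO_comp_subinterval {E : Type*} [Norm E] (hω : IsControl T ω) (hp : 0 < p)
    {S S' : Set (ℝ × ℝ)} (hS : S ⊆ timeSimplex 0 T) {φ : ℝ × ℝ → ℝ × ℝ} (hφ : MapsTo φ S S')
    (hsub : ∀ q ∈ S, φ q ∈ timeSimplex q.1 q.2) {f : ℝ × ℝ → E} {n : ℕ}
    (hf : f =O[𝓟 S'] fun q => controlScale p ω q ^ n) :
    (fun q => f (φ q)) =O[𝓟 S] fun q => controlScale p ω q ^ n := by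
  refine (hf.comp_tendsto (tendsto_principal_principal.2 hφ)).trans (IsBigO.pow ?_ n)
  refine .of_bound' (eventually_principal.2 fun q hq => ?_)
  have hφq : φ q ∈ timeSimplex 0 T := timeSimplex_subset (hS hq).1 (hS hq).2.2 (hsub q hq)
  simp only [Real.norm_of_nonneg (hω.controlScale_nonneg hφq),
    Real.norm_of_nonneg (hω.controlScale_nonneg (hS hq))]
  exact hω.controlScale_mono hp (hS hq) (hsub q hq)

theorem IsControl.isBigO_comp_left_half {E : Type*} [Norm E] (hω : IsControl T ω) (hp : 0 < p)
    {a u b : ℝ} (ha : 0 ≤ a) (hb : b ≤ T) {f : ℝ × ℝ → E} {n : ℕ}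
    (hf : f =O[𝓟 (timeSimplex a u)] fun q => controlScale p ω q ^ n) :
    (fun q => f (q.1, u)) =O[𝓟 (Icc a u ×ˢ Icc u b)] fun q => controlScale p ω q ^ n :=
  hω.isBigO_comp_subinterval (S' := timeSimplex a u) (φ := fun q => (q.1, u)) hp
    ((Icc_prod_Icc_subset_timeSimplex a u b).trans (timeSimplex_subset ha hb))
    (fun _ hq => ⟨hq.1.1, hq.1.2, le_rfl⟩) (fun _ hq => ⟨le_rfl, hq.1.2, hq.2.1⟩) hf

theorem IsControl.isBigO_comp_right_half {E : Type*} [Norm E] (hω : IsControl T ω) (hp : 0 < p)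
    {a u b : ℝ} (ha : 0 ≤ a) (hb : b ≤ T) {f : ℝ × ℝ → E} {n : ℕ}
    (hf : f =O[𝓟 (timeSimplex u b)] fun q => controlScale p ω q ^ n) :
    (fun q => f (u, q.2)) =O[𝓟 (Icc a u ×ˢ Icc u b)] fun q => controlScale p ω q ^ n :=
  hω.isBigO_comp_subinterval (S' := timeSimplex u b) (φ := fun q => (u, q.2)) hp
    ((Icc_prod_Icc_subset_timeSimplex a u b).trans (timeSimplex_subset ha hb))
    (fun _ hq => ⟨le_rfl, hq.2⟩) (fun _ hq => ⟨hq.1.2, hq.2.1, le_rfl⟩) hf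

end Control

section RoughPath

variable {T p : ℝ} {k : ℕ} {ω : ℝ → ℝ → ℝ} {x : ℝ → Euc k}
  {XX : ℝ → ℝ → EuclideanSpace ℝ (Fin k × Fin k)}

theorem IsRoughPath.isBigO_first (hX : IsRoughPath T p ω x XX) :
    (fun q : ℝ × ℝ => x q.2 - x q.1) =O[𝓟 (timeSimplex 0 T)] controlScale p ω :=
  .of_norm_eventuallyLE (eventually_principal.2 fun _ hq => hX.bound_x hq.1 hq.2.1 hq.2.2)

theorem IsRoughPath.isBigO_second (hω : IsControl T ω) (hX : IsRoughPath T p ω x XX) :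
    (fun q : ℝ × ℝ => XX q.1 q.2) =O[𝓟 (timeSimplex 0 T)] fun q => controlScale p ω q ^ 2 := by
  refine .of_norm_eventuallyLE (eventually_principal.2 fun q hq => ?_)
  simp only [controlScale_pow (hω.nonneg hq.1 hq.2.1 hq.2.2)]
  exact hX.bound_XX hq.1 hq.2.1 hq.2.2

theorem IsRoughPath.second_self_eq_zero (hX : IsRoughPath T p ω x XX) {s : ℝ} (h0 : 0 ≤ s)
    (hT : s ≤ T) : XX s s = 0 := by
  have tensorE_zero : tensorE (0 : Euc k) (0 : Euc k) = 0 := by ext; simp [tensorE]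
  simpa only [sub_self, tensorE_zero, add_zero, left_eq_add] using hX.chen h0 le_rfl le_rfl hT

end RoughPath

section Solution

variable {T p : ℝ} {k d : ℕ} {ω : ℝ → ℝ → ℝ} {x : ℝ → Euc k}
  {XX : ℝ → ℝ → EuclideanSpace ℝ (Fin k × Fin k)} {F : Euc d → Euc k →L[ℝ] Euc d}
  {z : ℝ → Euc d} {a u b : ℝ} {l : Filter (ℝ × ℝ)}

/-- The error of the second-order expansion of `z` over the time interval `[q.1, q.2]`. -/
def rdeRemainder (x : ℝ → Euc k) (XX : ℝ → ℝ → EuclideanSpace ℝ (Fin k × Fin k))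
    (F : Euc d → Euc k →L[ℝ] Euc d) (z : ℝ → Euc d) (q : ℝ × ℝ) : Euc d :=
  z q.2 - z q.1 - F (z q.1) (x q.2 - x q.1) - tapply (rdeQuad F (z q.1)) (XX q.1 q.2)

/-- Davie's notion of a solution of `dz = F(z) dX` on `[a, b]`: the second-order expansion of `z`
holds up to an error of order `ω(s,t)^(3/p)`, uniformly in `a ≤ s ≤ t ≤ b`. -/
def IsDavieSolutionOn (p : ℝ) (ω : ℝ → ℝ → ℝ) (x : ℝ → Euc k)
    (XX : ℝ → ℝ → EuclideanSpace ℝ (Fin k × Fin k)) (F : Euc d → Euc k →L[ℝ] Euc d)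
    (z : ℝ → Euc d) (a b : ℝ) : Prop :=
  rdeRemainder x XX F z =O[𝓟 (timeSimplex a b)] fun q => controlScale p ω q ^ 3

theorem isDavieSolutionOn_iff (hω : IsControl T ω) (ha : 0 ≤ a) (hb : b ≤ T) :
    IsDavieSolutionOn p ω x XX F z a b ↔
      ∃ C : ℝ, ∀ ⦃s t : ℝ⦄, a ≤ s → s ≤ t → t ≤ b →
        ‖z t - z s - F (z s) (x t - x s) - tapply (rdeQuad F (z s)) (XX s t)‖
          ≤ C * ω s t ^ (3 / p) := by
  have norm_scale : ∀ ⦃s t : ℝ⦄, a ≤ s → s ≤ t → t ≤ b →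
      ‖controlScale p ω (s, t) ^ 3‖ = ω s t ^ (3 / p) := fun s t has hst htb => by
    have hωst : 0 ≤ ω s t := hω.nonneg (ha.trans has) hst (htb.trans hb)
    rw [controlScale_pow hωst, Real.norm_of_nonneg (Real.rpow_nonneg hωst _), Nat.cast_ofNat]
  rw [IsDavieSolutionOn, isBigO_principal]
  refine exists_congr fun C => ⟨fun h s t has hst htb => ?_, fun h q hq => ?_⟩
  · simpa only [norm_scale has hst htb, rdeRemainder] using h (s, t) ⟨has, hst, htb⟩
  · simpa only [norm_scale hq.1 hq.2.1 hq.2.2, rdeRemainder] using h hq.1 hq.2.1 hq.2.2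

theorem isDavieSolutionOn_self (hX : IsRoughPath T p ω x XX) (h0 : 0 ≤ a) (hT : a ≤ T) :
    IsDavieSolutionOn p ω x XX F z a a := by
  refine .of_bound' (eventually_principal.2 ?_)
  rintro ⟨s, t⟩ ⟨has, hst, hta⟩
  obtain rfl : s = a := le_antisymm (hst.trans hta) has
  obtain rfl : t = s := le_antisymm hta hst
  simp [rdeRemainder, tapply, hX.second_self_eq_zero h0 hT]

theorem rdeRemainder_eq_add (hX : IsRoughPath T p ω x XX) (hF : Differentiable ℝ F) {s t : ℝ}
    (h0 : 0 ≤ s) (hsu : s ≤ u) (hut : u ≤ t) (hT : t ≤ T) :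
    rdeRemainder x XX F z (s, t) = rdeRemainder x XX F z (s, u) + rdeRemainder x XX F z (u, t)
      + (F (z u) - F (z s) - fderiv ℝ F (z s) (F (z s) (x u - x s))) (x t - x u)
      + (rdeQuadCLM F (z u) - rdeQuadCLM F (z s)) (XX u t) := by
  have hx : x t - x s = (x u - x s) + (x t - x u) := by abel
  simp only [rdeRemainder, ← rdeQuadCLM_apply (hF _), hX.chen h0 hsu hut hT, map_add,
    rdeQuadCLM_tensorE, hx, sub_apply]
  abel

namespace IsDavieSolutionOn

theorem isBigO_sub_sub_apply (hz : IsDavieSolutionOn p ω x XX F z a b) (hω : IsControl T ω)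
    (hp : 0 < p) (hX : IsRoughPath T p ω x XX) (hF : Differentiable ℝ F)
    (hF' : LocallyLipschitz (fderiv ℝ F)) (ha : 0 ≤ a) (hb : b ≤ T)
    (hl : l ≤ 𝓟 (timeSimplex a b)) (hz₁ : (fun q => z q.1) =O[l] fun _ => (1 : ℝ)) :
    (fun q => z q.2 - z q.1 - F (z q.1) (x q.2 - x q.1)) =O[l]
      fun q => controlScale p ω q ^ 2 := by
  have hl₀ : l ≤ 𝓟 (timeSimplex 0 T) := hl.trans (principal_mono.2 (timeSimplex_subset ha hb))
  have remainder : rdeRemainder x XX F z =O[l] fun q => controlScale p ω q ^ 2 :=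
    (hz.mono hl).trans (isBigO_pow_pow_of_le ((hω.isBigO_controlScale_one hp).mono hl₀) (by simp))
  have second_order : (fun q => rdeQuadCLM F (z q.1) (XX q.1 q.2)) =O[l]
      fun q => controlScale p ω q ^ 2 := by
    simpa only [one_mul] using isBigO_clm_apply
      (isBigO_one_comp_of_continuous (locallyLipschitz_rdeQuadCLM hF hF').continuous hz₁)
      ((hX.isBigO_second hω).mono hl₀)
  refine (remainder.add second_order).congr_left fun q => ?_
  rw [rdeRemainder, rdeQuadCLM_apply (hF _), sub_add_cancel]

theorem isBigO_sub (hz : IsDavieSolutionOn p ω x XX F z a b) (hω : IsControl T ω)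
    (hp : 0 < p) (hX : IsRoughPath T p ω x XX) (hF : Differentiable ℝ F)
    (hF' : LocallyLipschitz (fderiv ℝ F)) (ha : 0 ≤ a) (hb : b ≤ T)
    (hl : l ≤ 𝓟 (timeSimplex a b)) (hz₁ : (fun q => z q.1) =O[l] fun _ => (1 : ℝ)) :
    (fun q => z q.2 - z q.1) =O[l] controlScale p ω := by
  have hl₀ : l ≤ 𝓟 (timeSimplex 0 T) := hl.trans (principal_mono.2 (timeSimplex_subset ha hb))
  have error : (fun q => z q.2 - z q.1 - F (z q.1) (x q.2 - x q.1)) =O[l] controlScale p ω := by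
    simpa only [pow_one] using
      (hz.isBigO_sub_sub_apply hω hp hX hF hF' ha hb hl hz₁).trans
        (isBigO_pow_pow_of_le ((hω.isBigO_controlScale_one hp).mono hl₀) one_le_two)
  have first_order : (fun q => F (z q.1) (x q.2 - x q.1)) =O[l] controlScale p ω := by
    simpa only [one_mul] using isBigO_clm_apply
      (isBigO_one_comp_of_continuous hF.continuous hz₁) (hX.isBigO_first.mono hl₀)
  exact (error.add first_order).congr_left fun q => sub_add_cancel _ _

-- Expand from the fixed initial time `a`, where the coefficients are constants.
theorem isBigO_one (hz : IsDavieSolutionOn p ω x XX F z a b) (hω : IsControl T ω)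
    (hp : 0 < p) (hX : IsRoughPath T p ω x XX) (hF : Differentiable ℝ F)
    (hF' : LocallyLipschitz (fderiv ℝ F)) (ha : 0 ≤ a) (hb : b ≤ T) :
    z =O[𝓟 (Icc a b)] fun _ => (1 : ℝ) := by
  set S : Set (ℝ × ℝ) := {a} ×ˢ Icc a b
  have hS : S ⊆ timeSimplex a b := by
    rintro ⟨s, t⟩ ⟨rfl, ht⟩
    exact ⟨le_rfl, ht⟩
  have initial : (fun q => z q.1) =O[𝓟 S] fun _ => (1 : ℝ) :=
    (isBigO_const_const (z a) one_ne_zero _).congr'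
      (eventually_principal.2 fun q hq => congrArg z hq.1.symm) .rfl
  have increment : (fun q => z q.2 - z q.1) =O[𝓟 S] fun _ => (1 : ℝ) :=
    (hz.isBigO_sub hω hp hX hF hF' ha hb (principal_mono.2 hS) initial).trans
      ((hω.isBigO_controlScale_one hp).mono
        (principal_mono.2 (hS.trans (timeSimplex_subset ha hb))))
  have terminal : (fun q => z q.2) =O[𝓟 S] fun _ => (1 : ℝ) :=
    (increment.add initial).congr_left fun q => sub_add_cancel _ _
  exact terminal.comp_tendsto (k := fun t => (a, t))
    (tendsto_principal_principal.2 fun t ht => ⟨rfl, ht⟩)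

theorem isBigO_endpoints (hz : IsDavieSolutionOn p ω x XX F z a b) (hω : IsControl T ω)
    (hp : 0 < p) (hX : IsRoughPath T p ω x XX) (hF : Differentiable ℝ F)
    (hF' : LocallyLipschitz (fderiv ℝ F)) (ha : 0 ≤ a) (hb : b ≤ T) :
    (fun q : ℝ × ℝ => z q.1) =O[𝓟 (timeSimplex a b)] (fun _ => (1 : ℝ)) ∧
      (fun q : ℝ × ℝ => z q.2) =O[𝓟 (timeSimplex a b)] fun _ => (1 : ℝ) := by
  have hz₀ := hz.isBigO_one hω hp hX hF hF' ha hb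
  exact ⟨hz₀.comp_tendsto (tendsto_principal_principal.2
      fun q hq => ⟨hq.1, hq.2.1.trans hq.2.2⟩),
    hz₀.comp_tendsto (tendsto_principal_principal.2
      fun q hq => ⟨hq.1.trans hq.2.1, hq.2.2⟩)⟩

theorem isBigO_comp_sub_sub_fderiv (hz : IsDavieSolutionOn p ω x XX F z a b)
    (hω : IsControl T ω) (hp : 0 < p) (hX : IsRoughPath T p ω x XX) (hF : Differentiable ℝ F)
    (hF' : LocallyLipschitz (fderiv ℝ F)) (ha : 0 ≤ a) (hb : b ≤ T) :
    (fun q => F (z q.2) - F (z q.1) - fderiv ℝ F (z q.1) (F (z q.1) (x q.2 - x q.1)))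
      =O[𝓟 (timeSimplex a b)] fun q => controlScale p ω q ^ 2 := by
  obtain ⟨hz₁, hz₂⟩ := hz.isBigO_endpoints hω hp hX hF hF' ha hb
  have taylor : (fun q => F (z q.2) - F (z q.1) - fderiv ℝ F (z q.1) (z q.2 - z q.1))
      =O[𝓟 (timeSimplex a b)] fun q => controlScale p ω q ^ 2 :=
    (isBigO_sub_sub_fderiv_of_locallyLipschitz hF hF' hz₁ hz₂).trans
      ((hz.isBigO_sub hω hp hX hF hF' ha hb le_rfl hz₁).norm_left.pow 2)
  have first_order_error : (fun q => fderiv ℝ F (z q.1)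
      (z q.2 - z q.1 - F (z q.1) (x q.2 - x q.1)))
      =O[𝓟 (timeSimplex a b)] fun q => controlScale p ω q ^ 2 := by
    simpa only [one_mul] using isBigO_clm_apply
      (isBigO_one_comp_of_continuous hF'.continuous hz₁)
      (hz.isBigO_sub_sub_apply hω hp hX hF hF' ha hb le_rfl hz₁)
  refine (taylor.add first_order_error).congr_left fun q => ?_
  rw [map_sub (fderiv ℝ F (z q.1)) (z q.2 - z q.1), sub_add_sub_cancel]

theorem isBigO_rdeQuadCLM_sub (hz : IsDavieSolutionOn p ω x XX F z a b)
    (hω : IsControl T ω) (hp : 0 < p) (hX : IsRoughPath T p ω x XX) (hF : Differentiable ℝ F)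
    (hF' : LocallyLipschitz (fderiv ℝ F)) (ha : 0 ≤ a) (hb : b ≤ T) :
    (fun q => rdeQuadCLM F (z q.2) - rdeQuadCLM F (z q.1)) =O[𝓟 (timeSimplex a b)]
      controlScale p ω := by
  obtain ⟨hz₁, hz₂⟩ := hz.isBigO_endpoints hω hp hX hF hF' ha hb
  exact (isBigO_comp_sub_comp_of_locallyLipschitz (locallyLipschitz_rdeQuadCLM hF hF')
    hz₁ hz₂).trans (hz.isBigO_sub hω hp hX hF hF' ha hb le_rfl hz₁)

theorem isBigO_rdeRemainder_straddling (h₁ : IsDavieSolutionOn p ω x XX F z a u)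
    (h₂ : IsDavieSolutionOn p ω x XX F z u b) (hω : IsControl T ω) (hp : 0 < p)
    (hX : IsRoughPath T p ω x XX) (hF : Differentiable ℝ F)
    (hF' : LocallyLipschitz (fderiv ℝ F)) (ha : 0 ≤ a) (hau : a ≤ u) (hub : u ≤ b) (hb : b ≤ T) :
    rdeRemainder x XX F z =O[𝓟 (Icc a u ×ˢ Icc u b)] fun q => controlScale p ω q ^ 3 := by
  have hu : u ≤ T := hub.trans hb
  have left_remainder := hω.isBigO_comp_left_half hp ha hb h₁
  have right_remainder := hω.isBigO_comp_right_half hp ha hb h₂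
  have field_error := hω.isBigO_comp_left_half hp ha hb
    (h₁.isBigO_comp_sub_sub_fderiv hω hp hX hF hF' ha hu)
  have coefficient_increment := hω.isBigO_comp_left_half (n := 1) hp ha hb
    (by simpa only [pow_one] using h₁.isBigO_rdeQuadCLM_sub hω hp hX hF hF' ha hu)
  have restrict : 𝓟 (timeSimplex u b) ≤ 𝓟 (timeSimplex 0 T) :=
    principal_mono.2 (timeSimplex_subset (ha.trans hau) hb)
  have right_first := hω.isBigO_comp_right_half (n := 1) hp ha hb
    (by simpa only [pow_one] using hX.isBigO_first.mono restrict)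
  have right_second := hω.isBigO_comp_right_half hp ha hb ((hX.isBigO_second hω).mono restrict)
  have first_order := isBigO_clm_apply field_error right_first
  have second_order := isBigO_clm_apply coefficient_increment right_second
  simp only [← pow_add, Nat.reduceAdd] at first_order second_order
  refine (((left_remainder.add right_remainder).add first_order).add second_order).congr'
    (eventually_principal.2 fun q hq => ?_) .rfl
  exact (rdeRemainder_eq_add hX hF (ha.trans hq.1.1) hq.1.2 hq.2.1 (hq.2.2.trans hb)).symm

theorem append (h₁ : IsDavieSolutionOn p ω x XX F z a u)
    (h₂ : IsDavieSolutionOn p ω x XX F z u b) (hω : IsControl T ω) (hp : 0 < p)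
    (hX : IsRoughPath T p ω x XX) (hF : Differentiable ℝ F)
    (hF' : LocallyLipschitz (fderiv ℝ F)) (ha : 0 ≤ a) (hau : a ≤ u) (hub : u ≤ b) (hb : b ≤ T) :
    IsDavieSolutionOn p ω x XX F z a b := by
  have straddling := isBigO_rdeRemainder_straddling h₁ h₂ hω hp hX hF hF' ha hau hub hb
  refine ((IsBigO.sup h₁ h₂).sup straddling).mono ?_
  simp only [sup_principal, principal_mono, timeSimplex_subset_union]

theorem of_partition (hω : IsControl T ω) (hp : 0 < p) (hX : IsRoughPath T p ω x XX)
    (hF : Differentiable ℝ F) (hF' : LocallyLipschitz (fderiv ℝ F)) {l : ℕ} {τ : ℕ → ℝ}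
    (hτ0 : 0 ≤ τ 0) (hτl : τ l ≤ T) (hτ : MonotoneOn τ (Iic l))
    (hz : ∀ i < l, IsDavieSolutionOn p ω x XX F z (τ i) (τ (i + 1))) :
    IsDavieSolutionOn p ω x XX F z (τ 0) (τ l) := by
  induction l with
  | zero => exact isDavieSolutionOn_self hX hτ0 hτl
  | succ n ih =>
    have h_succ : τ n ≤ τ (n + 1) := hτ n.le_succ self_mem_Iic n.le_succ
    have initial := ih (h_succ.trans hτl) (hτ.mono (Iic_subset_Iic.2 n.le_succ))
      fun i hi => hz i (hi.trans n.lt_succ_self)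
    exact initial.append (hz n n.lt_succ_self) hω hp hX hF hF' hτ0
      (hτ n.succ.zero_le n.le_succ n.zero_le) h_succ hτl

end IsDavieSolutionOn

end Solution

theorem rde_patching_over_partition_general
    {T p : ℝ} (hp : 0 < p) {k : ℕ} {ω : ℝ → ℝ → ℝ} (hω : IsControl T ω)
    {x : ℝ → Euc k} {XX : ℝ → ℝ → EuclideanSpace ℝ (Fin k × Fin k)}
    (hX : IsRoughPath T p ω x XX) {d : ℕ} {F : Euc d → Euc k →L[ℝ] Euc d}
    (hF : Differentiable ℝ F) (hF' : LocallyLipschitz (fderiv ℝ F)) {z : ℝ → Euc d}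
    {l : ℕ} {τ : ℕ → ℝ} (hτ0 : τ 0 = 0) (hτl : τ l = T) (hτmono : ∀ i < l, τ i ≤ τ (i + 1))
    (hloc : ∀ i < l, ∃ Ci : ℝ, ∀ ⦃s t : ℝ⦄, τ i ≤ s → s ≤ t → t ≤ τ (i + 1) →
      ‖z t - z s - F (z s) (x t - x s) - tapply (rdeQuad F (z s)) (XX s t)‖
        ≤ Ci * ω s t ^ (3 / p)) :
    ∃ C : ℝ, ∀ ⦃s t : ℝ⦄, 0 ≤ s → s ≤ t → t ≤ T →
      ‖z t - z s - F (z s) (x t - x s) - tapply (rdeQuad F (z s)) (XX s t)‖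
        ≤ C * ω s t ^ (3 / p) := by
  subst hτl
  have hτ : MonotoneOn τ (Iic l) :=
    monotoneOn_of_le_add_one ordConnected_Iic fun i _ _ hi => hτmono i hi
  have local_solution : ∀ i < l, IsDavieSolutionOn p ω x XX F z (τ i) (τ (i + 1)) := fun i hi =>
    (isDavieSolutionOn_iff hω (hτ0 ▸ hτ l.zero_le hi.le i.zero_le) (hτ hi self_mem_Iic hi)).2
      (hloc i hi)
  have global_solution : IsDavieSolutionOn p ω x XX F z 0 (τ l) :=
    hτ0 ▸ .of_partition hω hp hX hF hF' hτ0.ge le_rfl hτ local_solution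
  exact (isDavieSolutionOn_iff hω le_rfl le_rfl).1 global_solution

/-- **Patching solutions of rough differential equations over a partition**
(Lemma 6.13 of Driver–Semko): if the Davie-type RDE expansion holds with constant `Cᵢ` on
each interval of a partition `0 = t₀ < … < t_l = T`, then it holds with a single constant
on all of `[0,T]`. -/
theorem rde_patching_over_partition
    {T p : ℝ} (hT : 0 < T) (hp1 : 1 ≤ p) (hp3 : p < 3) {k : ℕ} (hk : 1 ≤ k)
    {ω : ℝ → ℝ → ℝ} (hω : IsControl T ω)
    {x : ℝ → Euc k} {XX : ℝ → ℝ → EuclideanSpace ℝ (Fin k × Fin k)}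
    (hX : IsRoughPath T p ω x XX) (hgeo : IsWeakGeometric T x XX)
    {d : ℕ} {F : Euc d → Euc k →L[ℝ] Euc d} (hF : ContDiff ℝ (⊤ : ℕ∞) F)
    {z : ℝ → Euc d} (hz : ContinuousOn z (Set.Icc 0 T))
    {l : ℕ} (hl : 1 ≤ l) {τ : ℕ → ℝ}
    (hτ0 : τ 0 = 0) (hτl : τ l = T) (hτmono : ∀ i < l, τ i < τ (i + 1))
    (hloc : ∀ i < l, ∃ Ci : ℝ, ∀ ⦃s t : ℝ⦄, τ i ≤ s → s ≤ t → t ≤ τ (i + 1) →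
      ‖z t - z s - F (z s) (x t - x s) - tapply (rdeQuad F (z s)) (XX s t)‖
        ≤ Ci * ω s t ^ (3 / p)) :
    ∃ C : ℝ, ∀ ⦃s t : ℝ⦄, 0 ≤ s → s ≤ t → t ≤ T →
      ‖z t - z s - F (z s) (x t - x s) - tapply (rdeQuad F (z s)) (XX s t)‖
        ≤ C * ω s t ^ (3 / p) :=
  rde_patching_over_partition_general (zero_lt_one.trans_le hp1) hω hX
    (hF.differentiable (by simp)) (hF.fderiv_right (by norm_cast) : ContDiff ℝ 1 _).locallyLipschitz
    hτ0 hτl (fun i hi => (hτmono i hi).le) hloc
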